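/- Let H be a complex Hilbert space, let U and V be closed subspaces of H, let R and R' be bounded linear operators on H, and let 0 ≤ σ < τ be real numbers. Assume that (i) ‖R u‖ ≤ ‖u‖/(1+τ) for every u in the orthogonal complement V^⊥ of V, (ii) ‖R' u‖ ≥ ‖u‖/(1+σ) for every u ∈ U, and (iii) the operator norm satisfies ‖R − R'‖ < 1/(1+σ) − 1/(1+τ). Then U ∩ V^⊥ = {0}; equivalently, the restriction to U of the orthogonal projection of H onto V is injective. -/

import Mathlib

/-- quantitative injectivity of the projection. If `R` contracts by
`1/(1+τ)` on `Vᗮ`, `R'` expands by at least `1/(1+σ)` on `U`, and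
`‖R - R'‖ < 1/(1+σ) - 1/(1+τ)`, then `U ∩ Vᗮ = {0}`, i.e. the orthogonal
projection onto `V` restricted to `U` is injective. -/
theorem stmt_0 {H : Type*} [NormedAddCommGroup H] [InnerProductSpace ℂ H]
    [CompleteSpace H]
    (U V : Submodule ℂ H) (hU : IsClosed (U : Set H)) (hV : IsClosed (V : Set H))
    (R R' : H →L[ℂ] H) (σ τ : ℝ) (hσ : 0 ≤ σ) (hστ : σ < τ)
    (hR : ∀ u ∈ Vᗮ, ‖R u‖ ≤ ‖u‖ / (1 + τ))
    (hR' : ∀ u ∈ U, ‖u‖ / (1 + σ) ≤ ‖R' u‖)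
    (hdiff : ‖R - R'‖ < 1 / (1 + σ) - 1 / (1 + τ)) :
    U ⊓ Vᗮ = ⊥ := by
  rw [Submodule.eq_bot_iff]
  rintro u ⟨huU, huV⟩
  by_contra hne
  have hpos : 0 < ‖u‖ := norm_pos_iff.mpr hne
  have h1 := hR u huV
  have h2 := hR' u huU
  have h3 : ‖R u - R' u‖ ≤ ‖R - R'‖ * ‖u‖ := (R - R').le_opNorm u
  have h4 := mul_lt_mul_of_pos_right hdiff hpos
  have h5 : ‖R' u‖ ≤ ‖R u‖ + ‖R u - R' u‖ := norm_le_norm_add_norm_sub (R u) (R' u)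
  have h6 : (1 / (1 + σ) - 1 / (1 + τ)) * ‖u‖ = ‖u‖ / (1 + σ) - ‖u‖ / (1 + τ) := by ring
  linarith
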